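/- Let h : R → R be locally Lipschitz with |h(z) − h(z̃)| ≤ L(1 + |z| + |z̃|)|z − z̃| and ‖h(Z)‖_{ψ₁} ≤ L for Z ~ N(0,1). For any 0 < ε ≤ 1/2, if m ≥ C ε⁻² log(1/ε) n then with probability at least 1 − 3 exp(−c ε² m), |(1/m) Σ_j h(a_j^T u) − E h(Z)| ≤ ε uniformly over all unit vectors u ∈ R^n. -/

import Mathlib

/-!
Along a fixed direction the values `h ⟪X j, u⟫` are sub-exponential, because `h` grows at most
quadratically and `⟪X j, u⟫` is sub-Gaussian; Chernoff's bound makes their empirical mean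
concentrate at rate `exp (-c ε² m)`, and likewise bounds the mean of `⟪X j, u⟫ ^ 2`. Both hold
simultaneously on a `δ`-net of the sphere with at most `(1 + 2 / δ) ^ n` points.

To pass from a net point `v` to a nearby `u`, AM-GM turns the local Lipschitz bound into
`|h x - h y| ≲ L (δ (1 + x ^ 2 + y ^ 2) + (x - y) ^ 2 / δ)`. Summed over the sample, every term is
controlled by `sup_w ∑ j, ⟪X j, w⟫ ^ 2 / ‖w‖ ^ 2`, a squared operator norm which the values on the
net bound by `O(m)`; the total error is `O(L δ m)`. The same inequality, integrated, bounds the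
variation of the expectation. So `δ` can be taken proportional to `ε`, and it is the cardinality of
the net that forces `m ≳ ε⁻² log (1 / ε) n`.
-/

open MeasureTheory ProbabilityTheory

noncomputable def stdGaussianMat (m n : ℕ) : Measure (Fin m → Fin n → ℝ) :=
  Measure.pi fun _ => Measure.pi fun _ => gaussianReal 0 1

open scoped RealInnerProductSpace NNReal

section Nets

variable {E : Type*} [NormedAddCommGroup E]

theorem exists_norm_sub_le_of_isCover_sphere {δ : ℝ≥0} {N : Set E}
    (hN : Metric.IsCover δ (Metric.sphere 0 1) N) {u : E} (hu : ‖u‖ = 1) :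
    ∃ v ∈ N, ‖u - v‖ ≤ δ := by
  obtain ⟨v, hv, huv⟩ := hN (mem_sphere_zero_iff_norm.2 hu)
  refine ⟨v, hv, ?_⟩
  rw [← dist_eq_norm]
  simpa only [Set.mem_ofPred_eq, edist_nndist, ENNReal.coe_le_coe, ← NNReal.coe_le_coe, coe_nndist]
    using huv

variable [NormedSpace ℝ E]

theorem card_le_of_isSeparated_of_subset_closedBall [FiniteDimensional ℝ E] {δ : ℝ≥0} (hδ : 0 < δ)
    {x : E} {R : ℝ} (hR : 0 ≤ R) {s : Finset E} (hs : (s : Set E) ⊆ Metric.closedBall x R)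
    (hsep : Metric.IsSeparated δ (s : Set E)) :
    (s.card : ℝ) ≤ (1 + 2 * R / δ) ^ Module.finrank ℝ E := by
  borelize E
  let μ : Measure E := Measure.addHaar
  have hδ2 : (0 : ℝ) < δ / 2 := by positivity
  have hdisj : (s : Set E).PairwiseDisjoint fun c ↦ Metric.ball c (δ / 2) := by
    intro c hc d hd hcd
    refine Metric.ball_disjoint_ball ?_
    have hlt : (δ : ℝ) < dist c d := by
      have : (δ : ENNReal) < edist c d := hsep hc hd hcd
      rwa [edist_nndist, ENNReal.coe_lt_coe, ← NNReal.coe_lt_coe, coe_nndist] at this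
    linarith
  have hsub : (⋃ c ∈ s, Metric.ball c (δ / 2)) ⊆ Metric.ball x (R + δ / 2) := by
    refine Set.iUnion₂_subset fun c hc ↦ Metric.ball_subset_ball' ?_
    linarith [Metric.mem_closedBall.1 (hs hc)]
  have hvol : (s.card : ENNReal) * ENNReal.ofReal ((δ / 2 : ℝ) ^ Module.finrank ℝ E)
        * μ (Metric.ball 0 1)
      ≤ ENNReal.ofReal ((R + δ / 2) ^ Module.finrank ℝ E) * μ (Metric.ball 0 1) := by
    calc _ = μ (⋃ c ∈ s, Metric.ball c (δ / 2)) := by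
          rw [measure_biUnion_finset hdisj fun c _ ↦ measurableSet_ball]
          simp only [μ.addHaar_ball_of_pos _ hδ2, Finset.sum_const, nsmul_eq_mul, mul_assoc]
      _ ≤ μ (Metric.ball x (R + δ / 2)) := measure_mono hsub
      _ = _ := μ.addHaar_ball_of_pos _ (by positivity)
  have hratio : 1 + 2 * R / δ = (R + δ / 2) / (δ / 2) := by
    have : (δ : ℝ) ≠ 0 := (NNReal.coe_pos.2 hδ).ne'
    field_simp
    ring
  have hcard := ENNReal.toReal_le_of_le_ofReal (by positivity) <|
    (ENNReal.mul_le_mul_iff_left (Metric.measure_ball_pos _ _ zero_lt_one).ne'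
      measure_ball_lt_top.ne).1 hvol
  rw [ENNReal.toReal_mul, ENNReal.toReal_natCast, ENNReal.toReal_ofReal (by positivity),
    ← le_div_iff₀ (by positivity), ← div_pow] at hcard
  rwa [hratio]

theorem exists_finset_isCover_card_le [FiniteDimensional ℝ E] {δ : ℝ≥0} (hδ : 0 < δ) {x : E}
    {R : ℝ} (hR : 0 ≤ R) {A : Set E} (hA : A ⊆ Metric.closedBall x R) :
    ∃ N : Finset E, (N : Set E) ⊆ A ∧ Metric.IsCover δ A N ∧
      (N.card : ℝ) ≤ (1 + 2 * R / δ) ^ Module.finrank ℝ E := by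
  have hbdd : TotallyBounded A :=
    ((isCompact_closedBall x R).totallyBounded).subset hA
  obtain ⟨F, -, hFfin, hF⟩ :=
    Metric.exists_finite_isCover_of_totallyBounded (half_pos hδ).ne' hbdd
  have hpack : Metric.packingNumber δ A ≠ ⊤ := by
    refine ne_top_of_le_ne_top hFfin.encard_lt_top.ne ?_
    have := Metric.packingNumber_two_mul_le_externalCoveringNumber (δ / 2) A
    rw [mul_div_cancel₀ δ two_ne_zero] at this
    exact this.trans hF.externalCoveringNumber_le_encard
  have hfin : (Metric.maximalSeparatedSet δ A).Finite := by
    rwa [← Set.encard_lt_top_iff, Metric.encard_maximalSeparatedSet hpack, lt_top_iff_ne_top]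
  have hcoe : (hfin.toFinset : Set E) = Metric.maximalSeparatedSet δ A := hfin.coe_toFinset
  have hsub : (hfin.toFinset : Set E) ⊆ A := by
    rw [hcoe]
    exact Metric.maximalSeparatedSet_subset
  refine ⟨hfin.toFinset, hsub, ?_,
    card_le_of_isSeparated_of_subset_closedBall hδ hR (hsub.trans hA) ?_⟩
  · rw [hcoe]
    exact Metric.isCover_maximalSeparatedSet hpack
  · rw [hcoe]
    exact Metric.isSeparated_maximalSeparatedSet

theorem opNorm_le_add_mul_opNorm_of_isCover_sphere {F : Type*} [NormedAddCommGroup F]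
    [NormedSpace ℝ F] {δ : ℝ≥0} {N : Set E} (hN : Metric.IsCover δ (Metric.sphere 0 1) N)
    (A : E →L[ℝ] F) {R : ℝ} (hR : 0 ≤ R) (hA : ∀ v ∈ N, ‖A v‖ ≤ R) :
    ‖A‖ ≤ R + δ * ‖A‖ := by
  refine A.opNorm_le_of_unit_norm (by positivity) fun u hu ↦ ?_
  obtain ⟨v, hv, huv⟩ := exists_norm_sub_le_of_isCover_sphere hN hu
  calc ‖A u‖ = ‖A v + A (u - v)‖ := by rw [← map_add, add_sub_cancel]
    _ ≤ ‖A v‖ + ‖A‖ * ‖u - v‖ := (norm_add_le _ _).trans (by gcongr; exact A.le_opNorm _)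
    _ ≤ R + ‖A‖ * δ := by gcongr; exact hA v hv
    _ = R + δ * ‖A‖ := by rw [mul_comm]

end Nets

theorem sum_inner_sq_le_of_isCover_sphere {ι E : Type*} [Fintype ι] [NormedAddCommGroup E]
    [InnerProductSpace ℝ E] {δ : ℝ≥0} (hδ : δ ≤ 1 / 2) {N : Set E}
    (hN : Metric.IsCover δ (Metric.sphere 0 1) N) {x : ι → E} {S : ℝ} (hS : 0 ≤ S)
    (hx : ∀ v ∈ N, ∑ j, ⟪x j, v⟫ ^ 2 ≤ S) (w : E) :
    ∑ j, ⟪x j, w⟫ ^ 2 ≤ 4 * S * ‖w‖ ^ 2 := by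
  let A : E →L[ℝ] EuclideanSpace ℝ ι :=
    (EuclideanSpace.equiv ι ℝ).symm.toContinuousLinearMap ∘L
      ContinuousLinearMap.pi fun j ↦ innerSL ℝ (x j)
  have hA (w : E) : ‖A w‖ ^ 2 = ∑ j, ⟪x j, w⟫ ^ 2 := by
    simp [A, EuclideanSpace.real_norm_sq_eq]
  have hle : ‖A‖ ≤ √S + δ * ‖A‖ :=
    opNorm_le_add_mul_opNorm_of_isCover_sphere hN A (Real.sqrt_nonneg S) fun v hv ↦
      Real.le_sqrt_of_sq_le ((hA v).trans_le (hx v hv))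
  have hδ' : (δ : ℝ) ≤ 1 / 2 := by exact_mod_cast hδ
  have hop : ‖A‖ ≤ 2 * √S := by nlinarith [norm_nonneg A, hδ']
  calc ∑ j, ⟪x j, w⟫ ^ 2 = ‖A w‖ ^ 2 := (hA w).symm
    _ ≤ (2 * √S * ‖w‖) ^ 2 := by gcongr; exact A.le_of_opNorm_le hop w
    _ = 4 * S * ‖w‖ ^ 2 := by rw [mul_pow, mul_pow, Real.sq_sqrt hS]; norm_num

/-- The class of nonlinearities in the theorem: the local Lipschitz constant grows at most linearly,
`|h z - h z'| ≤ L (1 + |z| + |z'|) |z - z'|`. -/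
def LinearGrowthLipschitzWith (L : ℝ) (h : ℝ → ℝ) : Prop :=
  ∀ z z' : ℝ, |h z - h z'| ≤ L * (1 + |z| + |z'|) * |z - z'|

namespace LinearGrowthLipschitzWith

variable {L : ℝ} {h : ℝ → ℝ}

theorem nonneg (hh : LinearGrowthLipschitzWith L h) : 0 ≤ L := by
  have := (abs_nonneg _).trans (hh 1 0)
  norm_num at this
  linarith

theorem continuous (hh : LinearGrowthLipschitzWith L h) : Continuous h := by
  refine continuous_iff_continuousAt.2 fun x ↦ tendsto_iff_dist_tendsto_zero.2 ?_
  have hlim : Filter.Tendsto (fun z ↦ L * (1 + |z| + |x|) * |z - x|) (nhds x) (nhds 0) := by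
    have hc : Continuous fun z ↦ L * (1 + |z| + |x|) * |z - x| := by fun_prop
    simpa using hc.tendsto x
  exact squeeze_zero (fun _ ↦ dist_nonneg) (fun z ↦ hh z x) hlim

theorem abs_sub_apply_zero_le (hh : LinearGrowthLipschitzWith L h) (z : ℝ) :
    |h z - h 0| ≤ L * (1 + 2 * z ^ 2) := by
  calc |h z - h 0| ≤ L * ((1 + |z|) * |z|) := by simpa [mul_assoc] using hh z 0
    _ ≤ L * (1 + 2 * z ^ 2) := by
      gcongr
      · exact hh.nonneg
      · nlinarith [sq_abs z, sq_nonneg (|z| - 1)]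

theorem abs_sub_le_add_sq (hh : LinearGrowthLipschitzWith L h) {δ : ℝ} (hδ : 0 < δ) (x y : ℝ) :
    |h x - h y| ≤ L * δ / 2 * (3 * (1 + x ^ 2 + y ^ 2)) + L / (2 * δ) * (x - y) ^ 2 := by
  have hL := hh.nonneg
  have hsq : (1 + |x| + |y|) ^ 2 ≤ 3 * (1 + x ^ 2 + y ^ 2) := by
    rw [← sq_abs x, ← sq_abs y]
    nlinarith [sq_nonneg (1 - |x|), sq_nonneg (1 - |y|), sq_nonneg (|x| - |y|)]
  have hamgm : (1 + |x| + |y|) * |x - y|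
      ≤ δ / 2 * (1 + |x| + |y|) ^ 2 + 1 / (2 * δ) * (x - y) ^ 2 := by
    have hkey : 0 ≤ 1 / (2 * δ) * (δ * (1 + |x| + |y|) - |x - y|) ^ 2 := by positivity
    have heq : 1 / (2 * δ) * (δ * (1 + |x| + |y|) - |x - y|) ^ 2
        = δ / 2 * (1 + |x| + |y|) ^ 2 + 1 / (2 * δ) * |x - y| ^ 2
          - (1 + |x| + |y|) * |x - y| := by
      field_simp
      ring
    rw [sq_abs] at heq
    linarith
  calc |h x - h y| ≤ L * ((1 + |x| + |y|) * |x - y|) := by simpa only [mul_assoc] using hh x y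
    _ ≤ L * (δ / 2 * (3 * (1 + x ^ 2 + y ^ 2)) + 1 / (2 * δ) * (x - y) ^ 2) := by
      gcongr
      exact hamgm.trans (by gcongr)
    _ = _ := by ring

variable {α : Type*} [MeasurableSpace α] {ν : Measure α} [IsFiniteMeasure ν]

theorem integrable_comp (hh : LinearGrowthLipschitzWith L h) {f : α → ℝ} (hf : MemLp f 2 ν) :
    Integrable (fun a ↦ h (f a)) ν := by
  have hdom : Integrable (fun a ↦ L * (1 + 2 * f a ^ 2)) ν :=
    ((integrable_const 1).add (hf.integrable_sq.const_mul 2)).const_mul L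
  have hmeas : AEStronglyMeasurable (fun a ↦ h (f a)) ν :=
    hh.continuous.comp_aestronglyMeasurable hf.aestronglyMeasurable
  have hsub : Integrable (fun a ↦ h (f a) - h 0) ν :=
    hdom.mono' (hmeas.sub aestronglyMeasurable_const) <|
      .of_forall fun a ↦ hh.abs_sub_apply_zero_le (f a)
  simpa [Pi.add_def] using hsub.add (integrable_const (h 0))

theorem abs_integral_comp_sub_apply_zero_le {P : Measure α} [IsProbabilityMeasure P]
    (hh : LinearGrowthLipschitzWith L h) {f : α → ℝ} (hf : MemLp f 2 P) :
    |∫ a, h (f a) ∂P - h 0| ≤ L * (1 + 2 * ∫ a, f a ^ 2 ∂P) := by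
  have hsq : Integrable (fun a ↦ 2 * f a ^ 2) P := hf.integrable_sq.const_mul 2
  have hdom : Integrable (fun a ↦ L * (1 + 2 * f a ^ 2)) P :=
    ((integrable_const 1).add hsq).const_mul L
  calc |∫ a, h (f a) ∂P - h 0| = |∫ a, (h (f a) - h 0) ∂P| := by
        rw [integral_sub (hh.integrable_comp hf) (integrable_const _)]
        simp
    _ ≤ ∫ a, L * (1 + 2 * f a ^ 2) ∂P :=
      norm_integral_le_of_norm_le (f := fun a ↦ h (f a) - h 0) hdom <|
        .of_forall fun a ↦ hh.abs_sub_apply_zero_le (f a)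
    _ = L * (1 + 2 * ∫ a, f a ^ 2 ∂P) := by
      rw [integral_const_mul, integral_add (integrable_const 1) hsq, integral_const_mul]
      simp

theorem abs_integral_comp_sub_le (hh : LinearGrowthLipschitzWith L h) {f g : α → ℝ}
    (hf : MemLp f 2 ν) (hg : MemLp g 2 ν) {δ S : ℝ} (hδ : 0 < δ) (hfS : ∫ a, f a ^ 2 ∂ν ≤ S)
    (hgS : ∫ a, g a ^ 2 ∂ν ≤ S) (hfg : ∫ a, (f a - g a) ^ 2 ∂ν ≤ δ ^ 2 * S) :
    |∫ a, h (f a) ∂ν - ∫ a, h (g a) ∂ν| ≤ L * δ / 2 * (3 * ν.real Set.univ + 7 * S) := by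
  have hL := hh.nonneg
  have hfi := hf.integrable_sq
  have hgi := hg.integrable_sq
  have hone : Integrable (fun a ↦ 1 + f a ^ 2) ν := (integrable_const 1).add hfi
  have hlin : Integrable (fun a ↦ L * δ / 2 * (3 * (1 + f a ^ 2 + g a ^ 2))) ν :=
    ((hone.add hgi).const_mul 3).const_mul _
  have hquad : Integrable (fun a ↦ L / (2 * δ) * (f a - g a) ^ 2) ν :=
    (hf.sub hg).integrable_sq.const_mul _
  have hbound (a : α) := hh.abs_sub_le_add_sq hδ (f a) (g a)
  rw [← integral_sub (hh.integrable_comp hf) (hh.integrable_comp hg)]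
  calc |∫ a, (h (f a) - h (g a)) ∂ν|
      ≤ ∫ a, (L * δ / 2 * (3 * (1 + f a ^ 2 + g a ^ 2)) + L / (2 * δ) * (f a - g a) ^ 2) ∂ν :=
        norm_integral_le_of_norm_le (f := fun a ↦ h (f a) - h (g a)) (hlin.add hquad)
          (.of_forall hbound)
    _ = L * δ / 2 * (3 * (ν.real Set.univ + ∫ a, f a ^ 2 ∂ν + ∫ a, g a ^ 2 ∂ν))
        + L / (2 * δ) * ∫ a, (f a - g a) ^ 2 ∂ν := by
      rw [integral_add hlin hquad, integral_const_mul, integral_const_mul, integral_const_mul,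
        integral_add hone hgi, integral_add (integrable_const 1) hfi]
      simp
    _ ≤ L * δ / 2 * (3 * (ν.real Set.univ + S + S)) + L / (2 * δ) * (δ ^ 2 * S) := by gcongr
    _ = L * δ / 2 * (3 * ν.real Set.univ + 7 * S) := by
      field_simp
      ring

variable {E : Type*} [NormedAddCommGroup E] [InnerProductSpace ℝ E]

theorem abs_integral_comp_inner_sub_le (hh : LinearGrowthLipschitzWith L h) {X : α → E}
    (hX : ∀ w, MemLp (fun a ↦ ⟪X a, w⟫) 2 ν) {S : ℝ}
    (hS : ∀ w, ∫ a, ⟪X a, w⟫ ^ 2 ∂ν ≤ S * ‖w‖ ^ 2) {δ : ℝ} (hδ : 0 < δ) {u v : E} (hu : ‖u‖ = 1)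
    (hv : ‖v‖ = 1) (huv : ‖u - v‖ ≤ δ) :
    |∫ a, h ⟪X a, u⟫ ∂ν - ∫ a, h ⟪X a, v⟫ ∂ν| ≤ L * δ / 2 * (3 * ν.real Set.univ + 7 * S) := by
  have hS₀ : 0 ≤ S := by simpa [hu] using (integral_nonneg fun a ↦ sq_nonneg _).trans (hS u)
  refine hh.abs_integral_comp_sub_le (hX u) (hX v) hδ (by simpa [hu] using hS u)
    (by simpa [hv] using hS v) ?_
  calc ∫ a, (⟪X a, u⟫ - ⟪X a, v⟫) ^ 2 ∂ν
      = ∫ a, ⟪X a, u - v⟫ ^ 2 ∂ν := by simp only [inner_sub_right]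
    _ ≤ S * ‖u - v‖ ^ 2 := hS _
    _ ≤ S * δ ^ 2 := by gcongr
    _ = δ ^ 2 * S := mul_comm _ _

theorem abs_sum_comp_inner_sub_le {ι : Type*} [Fintype ι] (hh : LinearGrowthLipschitzWith L h)
    {x : ι → E} {S : ℝ} (hS : ∀ w, ∑ j, ⟪x j, w⟫ ^ 2 ≤ S * ‖w‖ ^ 2) {δ : ℝ} (hδ : 0 < δ) {u v : E}
    (hu : ‖u‖ = 1) (hv : ‖v‖ = 1) (huv : ‖u - v‖ ≤ δ) :
    |∑ j, h ⟪x j, u⟫ - ∑ j, h ⟪x j, v⟫| ≤ L * δ / 2 * (3 * Fintype.card ι + 7 * S) := by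
  let : MeasurableSpace ι := ⊤
  have : MeasurableSingletonClass ι := ⟨fun _ ↦ trivial⟩
  simpa [integral_count, measureReal_def] using
    hh.abs_integral_comp_inner_sub_le (ν := Measure.count) (X := x) (fun w ↦ .of_discrete)
      (by simpa [integral_count] using hS) hδ hu hv huv

end LinearGrowthLipschitzWith

theorem exp_le_one_add_add_sq_mul_exp_abs (x : ℝ) :
    Real.exp x ≤ 1 + x + x ^ 2 * Real.exp |x| := by
  have htaylor := Complex.norm_exp_sub_sum_le_norm_mul_exp (x : ℂ) 2
  simp only [Finset.sum_range_succ, Finset.sum_range_zero, pow_zero, pow_one, Nat.factorial,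
    Nat.cast_one, div_one, zero_add, mul_one] at htaylor
  norm_cast at htaylor
  rw [Real.norm_eq_abs, Real.norm_eq_abs, sq_abs] at htaylor
  linarith [le_abs_self (Real.exp x - (1 + x))]

theorem exp_mul_le_one_add_add_sq_mul_exp_mul_abs {a t : ℝ} (ha : 0 < a) (ht : |t| ≤ a / 2)
    (x : ℝ) : Real.exp (t * x) ≤ 1 + t * x + t ^ 2 * (8 / a ^ 2 * Real.exp (a * |x|)) := by
  have hsq : x ^ 2 ≤ 8 / a ^ 2 * Real.exp (a / 2 * |x|) := by
    have := Real.pow_div_factorial_le_exp (a / 2 * |x|) (by positivity) 2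
    rw [mul_pow, sq_abs] at this
    rw [div_mul_eq_mul_div, le_div_iff₀ (by positivity)]
    norm_num at this
    linarith
  have hexp : Real.exp |t * x| ≤ Real.exp (a / 2 * |x|) := by
    rw [abs_mul]
    gcongr
  calc Real.exp (t * x) ≤ 1 + t * x + t ^ 2 * (x ^ 2 * Real.exp |t * x|) := by
        simpa only [mul_pow, mul_assoc] using exp_le_one_add_add_sq_mul_exp_abs (t * x)
    _ ≤ 1 + t * x
        + t ^ 2 * (8 / a ^ 2 * Real.exp (a / 2 * |x|) * Real.exp (a / 2 * |x|)) := by gcongr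
    _ = 1 + t * x + t ^ 2 * (8 / a ^ 2 * Real.exp (a * |x|)) := by
      rw [mul_assoc (8 / a ^ 2), ← Real.exp_add]
      ring_nf

section Chernoff

variable {Ω : Type*} [MeasurableSpace Ω] {P : Measure Ω}

/-- A sub-exponential random variable in terms of its moment generating function: it is at most
`exp (K t ^ 2)` for `|t| ≤ t₀`. This is the local analogue of `HasSubgaussianMGF`. -/
structure HasSubexponentialMGF (X : Ω → ℝ) (K t₀ : ℝ) (P : Measure Ω) : Prop where
  integrable_exp_mul : ∀ t : ℝ, |t| ≤ t₀ → Integrable (fun ω ↦ Real.exp (t * X ω)) P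
  mgf_le : ∀ t : ℝ, |t| ≤ t₀ → mgf X P t ≤ Real.exp (K * t ^ 2)

namespace HasSubexponentialMGF

variable {X : Ω → ℝ} {K t₀ : ℝ}

theorem aemeasurable (hX : HasSubexponentialMGF X K t₀ P) (ht₀ : 0 < t₀) : AEMeasurable X P :=
  aemeasurable_of_integrable_exp_mul ht₀.ne' (hX.integrable_exp_mul t₀ (abs_of_pos ht₀).le)
    (hX.integrable_exp_mul 0 (by simpa using ht₀.le))

theorem neg (hX : HasSubexponentialMGF X K t₀ P) : HasSubexponentialMGF (-X) K t₀ P where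
  integrable_exp_mul t ht := by
    simpa using hX.integrable_exp_mul (-t) ((abs_neg t).trans_le ht)
  mgf_le t ht := by
    simpa [mgf_neg] using hX.mgf_le (-t) ((abs_neg t).trans_le ht)

theorem of_integral_exp_mul_abs_le [IsProbabilityMeasure P] (hX : AEMeasurable X P)
    (hmean : P[X] = 0) {a B : ℝ} (ha : 0 < a) (hint : Integrable (fun ω ↦ Real.exp (a * |X ω|)) P)
    (hB : ∫ ω, Real.exp (a * |X ω|) ∂P ≤ B) :
    HasSubexponentialMGF X (8 * B / a ^ 2) (a / 2) P := by
  have hXint : Integrable X P := by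
    refine (hint.const_mul (1 / a)).mono' hX.aestronglyMeasurable (.of_forall fun ω ↦ ?_)
    rw [Real.norm_eq_abs, one_div_mul_eq_div, le_div_iff₀ ha]
    linarith [Real.add_one_le_exp (a * |X ω|)]
  have hlin (t : ℝ) : Integrable (fun ω ↦ 1 + t * X ω) P :=
    (integrable_const 1).add (hXint.const_mul t)
  have hquad (t : ℝ) : Integrable (fun ω ↦ t ^ 2 * (8 / a ^ 2 * Real.exp (a * |X ω|))) P :=
    (hint.const_mul _).const_mul _
  have hexp (t : ℝ) (ht : |t| ≤ a / 2) : Integrable (fun ω ↦ Real.exp (t * X ω)) P :=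
    ((hlin t).add (hquad t)).mono' (by fun_prop) <| .of_forall fun ω ↦ by
      simpa using exp_mul_le_one_add_add_sq_mul_exp_mul_abs ha ht (X ω)
  refine ⟨hexp, fun t ht ↦ ?_⟩
  calc mgf X P t ≤ ∫ ω, (1 + t * X ω + t ^ 2 * (8 / a ^ 2 * Real.exp (a * |X ω|))) ∂P :=
        integral_mono (hexp t ht) ((hlin t).add (hquad t)) fun ω ↦
          exp_mul_le_one_add_add_sq_mul_exp_mul_abs ha ht (X ω)
    _ = 1 + t ^ 2 * (8 / a ^ 2 * ∫ ω, Real.exp (a * |X ω|) ∂P) := by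
      rw [integral_add (hlin t) (hquad t), integral_add (integrable_const 1) (hXint.const_mul t),
        integral_const_mul, integral_const_mul, integral_const_mul, hmean]
      simp
    _ ≤ 1 + t ^ 2 * (8 / a ^ 2 * B) := by gcongr
    _ = 8 * B / a ^ 2 * t ^ 2 + 1 := by ring
    _ ≤ Real.exp (8 * B / a ^ 2 * t ^ 2) := Real.add_one_le_exp _

end HasSubexponentialMGF

variable {ι : Type*} [Fintype ι] {X : ι → Ω → ℝ}

theorem measureReal_sum_ge_le_exp_of_iIndepFun (hindep : iIndepFun X P)
    (hmeas : ∀ j, AEMeasurable (X j) P) {t κ : ℝ} (ht : 0 ≤ t)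
    (hint : ∀ j, Integrable (fun ω ↦ Real.exp (t * X j ω)) P)
    (hκ : ∀ j, mgf (X j) P t ≤ Real.exp κ) (x : ℝ) :
    P.real {ω | x ≤ ∑ j, X j ω} ≤ Real.exp (Fintype.card ι * κ - t * x) := by
  have := hindep.isProbabilityMeasure
  have hmgf : mgf (∑ j, X j) P t = ∏ j, mgf (X j) P t := hindep.mgf_sum₀ hmeas _
  have hint_sum : Integrable (fun ω ↦ Real.exp (t * (∑ j, X j) ω)) P := by
    rw [← mgf_pos_iff, hmgf]
    exact Finset.prod_pos fun j _ ↦ mgf_pos (hint j)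
  calc P.real {ω | x ≤ ∑ j, X j ω} ≤ Real.exp (-t * x) * mgf (∑ j, X j) P t := by
        simpa only [Finset.sum_apply] using measure_ge_le_exp_mul_mgf x ht hint_sum
    _ ≤ Real.exp (-t * x) * Real.exp κ ^ Fintype.card ι := by
      rw [hmgf, ← Finset.card_univ, ← Finset.prod_const]
      gcongr with j
      · exact fun j _ ↦ mgf_nonneg
      · exact hκ j
    _ = Real.exp (Fintype.card ι * κ - t * x) := by
      rw [← Real.exp_nat_mul, ← Real.exp_add]
      ring_nf

theorem measureReal_sum_ge_le_exp_of_hasSubexponentialMGF (hindep : iIndepFun X P) {K t₀ : ℝ}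
    (hK : 0 < K) (ht₀ : 0 < t₀) (hX : ∀ j, HasSubexponentialMGF (X j) K t₀ P) {η : ℝ}
    (hη : 0 < η) (hη' : η ≤ 1) :
    P.real {ω | η * Fintype.card ι ≤ ∑ j, X j ω}
      ≤ Real.exp (-(min t₀ (1 / (2 * K)) / 2 * η ^ 2 * Fintype.card ι)) := by
  set l := min t₀ (1 / (2 * K))
  have hl : 0 < l := by positivity
  have hKl : K * l ≤ 1 / 2 := by
    calc K * l ≤ K * (1 / (2 * K)) := by
          gcongr
          exact min_le_right _ _
      _ = 1 / 2 := by field_simp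
  have ht : |η * l| ≤ t₀ := by
    rw [abs_of_pos (by positivity)]
    exact (mul_le_of_le_one_left hl.le hη').trans (min_le_left _ _)
  refine (measureReal_sum_ge_le_exp_of_iIndepFun hindep (fun j ↦ (hX j).aemeasurable ht₀)
    (by positivity) (fun j ↦ (hX j).integrable_exp_mul _ ht)
    (fun j ↦ (hX j).mgf_le _ ht) _).trans ?_
  gcongr
  calc (Fintype.card ι : ℝ) * (K * (η * l) ^ 2) - η * l * (η * Fintype.card ι)
      = (K * l - 1) * (l * η ^ 2 * Fintype.card ι) := by ring
    _ ≤ (1 / 2 - 1) * (l * η ^ 2 * Fintype.card ι) := by gcongr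
    _ = -(l / 2 * η ^ 2 * Fintype.card ι) := by ring

theorem measureReal_abs_sum_ge_le_exp_of_hasSubexponentialMGF (hindep : iIndepFun X P) {K t₀ : ℝ}
    (hK : 0 < K) (ht₀ : 0 < t₀) (hX : ∀ j, HasSubexponentialMGF (X j) K t₀ P) {η : ℝ}
    (hη : 0 < η) (hη' : η ≤ 1) :
    P.real {ω | η * Fintype.card ι ≤ |∑ j, X j ω|}
      ≤ 2 * Real.exp (-(min t₀ (1 / (2 * K)) / 2 * η ^ 2 * Fintype.card ι)) := by
  have := hindep.isProbabilityMeasure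
  have hupper := measureReal_sum_ge_le_exp_of_hasSubexponentialMGF hindep hK ht₀ hX hη hη'
  have hlower := measureReal_sum_ge_le_exp_of_hasSubexponentialMGF
    (hindep.comp (fun _ x ↦ -x) fun _ ↦ measurable_neg) hK ht₀ (fun j ↦ (hX j).neg) hη hη'
  simp only [Function.comp_apply, Finset.sum_neg_distrib] at hlower
  have hunion : {ω | η * Fintype.card ι ≤ |∑ j, X j ω|} =
      {ω | η * Fintype.card ι ≤ ∑ j, X j ω} ∪ {ω | η * Fintype.card ι ≤ -∑ j, X j ω} := by
    ext ω
    exact le_abs (α := ℝ)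
  rw [hunion]
  linarith [measureReal_union_le (μ := P) {ω | η * Fintype.card ι ≤ ∑ j, X j ω}
    {ω | η * Fintype.card ι ≤ -∑ j, X j ω}]

end Chernoff

section ExpSqMoment

variable {Ω : Type*} [MeasurableSpace Ω] {P : Measure Ω}

/-- A quantitative sub-Gaussian (`ψ₂`) condition: `E exp (s Y ^ 2) ≤ M`. Integrability is a separate
field because the Bochner integral of a non-integrable function is zero. -/
structure HasExpSqMomentLE (Y : Ω → ℝ) (s M : ℝ) (P : Measure Ω) : Prop where
  aemeasurable : AEMeasurable Y P
  integrable_exp_sq : Integrable (fun ω ↦ Real.exp (s * Y ω ^ 2)) P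
  integral_exp_sq_le : ∫ ω, Real.exp (s * Y ω ^ 2) ∂P ≤ M

namespace HasExpSqMomentLE

variable {Y : Ω → ℝ} {s M : ℝ}

theorem memLp_two (hY : HasExpSqMomentLE Y s M P) (hs : 0 < s) : MemLp Y 2 P := by
  have hmeas := hY.aemeasurable
  refine (memLp_two_iff_integrable_sq hmeas.aestronglyMeasurable).2 <|
    (hY.integrable_exp_sq.const_mul (1 / s)).mono' (by fun_prop) (.of_forall fun ω ↦ ?_)
  rw [Real.norm_of_nonneg (sq_nonneg _), one_div_mul_eq_div, le_div_iff₀ hs]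
  linarith [Real.add_one_le_exp (s * Y ω ^ 2)]

theorem integral_sq_le (hY : HasExpSqMomentLE Y s M P) (hs : 0 < s) :
    ∫ ω, Y ω ^ 2 ∂P ≤ M / s := by
  rw [le_div_iff₀' hs, ← integral_const_mul]
  refine (integral_mono ((hY.memLp_two hs).integrable_sq.const_mul s) hY.integrable_exp_sq
    fun ω ↦ ?_).trans hY.integral_exp_sq_le
  linarith [Real.add_one_le_exp (s * Y ω ^ 2)]

theorem mul_abs_comp_sub_integral_le [IsProbabilityMeasure P] (hY : HasExpSqMomentLE Y s M P)
    (hs : 0 < s) {L : ℝ} (hL : 0 < L) {h : ℝ → ℝ} (hh : LinearGrowthLipschitzWith L h) (ω : Ω) :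
    s / (2 * L) * |h (Y ω) - ∫ ω', h (Y ω') ∂P| ≤ s + M + s * Y ω ^ 2 := by
  have hmean : |h 0 - ∫ ω', h (Y ω') ∂P| ≤ L * (1 + 2 * (M / s)) := by
    rw [abs_sub_comm]
    refine (hh.abs_integral_comp_sub_apply_zero_le (hY.memLp_two hs)).trans ?_
    gcongr
    exact hY.integral_sq_le hs
  calc s / (2 * L) * |h (Y ω) - ∫ ω', h (Y ω') ∂P|
      ≤ s / (2 * L) * (L * (1 + 2 * Y ω ^ 2) + L * (1 + 2 * (M / s))) := by
        gcongr
        exact (abs_sub_le _ (h 0) _).trans (add_le_add (hh.abs_sub_apply_zero_le (Y ω)) hmean)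
    _ = s + M + s * Y ω ^ 2 := by
      field_simp
      ring

theorem hasSubexponentialMGF_comp [IsProbabilityMeasure P] (hY : HasExpSqMomentLE Y s M P)
    (hs : 0 < s) {L : ℝ} (hL : 0 < L) {h : ℝ → ℝ} (hh : LinearGrowthLipschitzWith L h) :
    HasSubexponentialMGF (fun ω ↦ h (Y ω) - ∫ ω', h (Y ω') ∂P)
      (8 * (Real.exp (s + M) * M) / (s / (2 * L)) ^ 2) (s / (2 * L) / 2) P := by
  set μ := ∫ ω', h (Y ω') ∂P with hμ
  have hmem := hY.memLp_two hs
  have hmeas : AEMeasurable (fun ω ↦ h (Y ω) - μ) P :=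
    (hh.continuous.measurable.comp_aemeasurable hY.aemeasurable).sub_const μ
  have hmean : ∫ ω, (h (Y ω) - μ) ∂P = 0 := by
    rw [integral_sub (hh.integrable_comp hmem) (integrable_const μ)]
    simp [hμ]
  have hexp (ω : Ω) : Real.exp (s / (2 * L) * |h (Y ω) - μ|)
      ≤ Real.exp (s + M) * Real.exp (s * Y ω ^ 2) := by
    rw [← Real.exp_add]
    exact Real.exp_le_exp.2 (hY.mul_abs_comp_sub_integral_le hs hL hh ω)
  have hdom := hY.integrable_exp_sq.const_mul (Real.exp (s + M))
  have hint : Integrable (fun ω ↦ Real.exp (s / (2 * L) * |h (Y ω) - μ|)) P :=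
    hdom.mono' (hmeas.abs.const_mul _).exp.aestronglyMeasurable <|
      .of_forall fun ω ↦ by simpa using hexp ω
  refine .of_integral_exp_mul_abs_le hmeas hmean (by positivity) hint ?_
  calc ∫ ω, Real.exp (s / (2 * L) * |h (Y ω) - μ|) ∂P
      ≤ ∫ ω, Real.exp (s + M) * Real.exp (s * Y ω ^ 2) ∂P := integral_mono hint hdom hexp
    _ ≤ Real.exp (s + M) * M := by
      rw [integral_const_mul]
      gcongr
      exact hY.integral_exp_sq_le

end HasExpSqMomentLE

theorem measureReal_sum_sq_ge_le_exp_of_hasExpSqMomentLE {ι : Type*} [Fintype ι] {Y : ι → Ω → ℝ}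
    (hindep : iIndepFun Y P) {s M : ℝ} (hs : 0 < s) (hY : ∀ j, HasExpSqMomentLE (Y j) s M P) :
    P.real {ω | (M + 1) / s * Fintype.card ι ≤ ∑ j, Y j ω ^ 2}
      ≤ Real.exp (-(Fintype.card ι : ℝ)) := by
  have hsq : iIndepFun (fun j ω ↦ Y j ω ^ 2) P :=
    hindep.comp (fun _ x ↦ x ^ 2) fun _ ↦ measurable_id.pow_const 2
  have hM : M ≤ Real.exp M := by linarith [Real.add_one_le_exp M]
  refine (measureReal_sum_ge_le_exp_of_iIndepFun hsq (fun j ↦ (hY j).aemeasurable.pow_const 2) hs.le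
    (fun j ↦ (hY j).integrable_exp_sq) (fun j ↦ (hY j).integral_exp_sq_le.trans hM) _).trans_eq ?_
  congr 1
  field_simp
  ring

/-- The exceptional event attached to a fixed direction, along which the data are the numbers
`Y j ω`: their mean square is at least `T`, or the empirical mean of `h` deviates from its
expectation by at least `η`. Both conditions are multiplied by the sample size. -/
def deviationEvent {ι : Type*} [Fintype ι] (P : Measure Ω) (h : ℝ → ℝ) (Y : ι → Ω → ℝ) (T η : ℝ) :
    Set Ω :=
  {ω | T * Fintype.card ι ≤ ∑ j, Y j ω ^ 2} ∪
    {ω | η * Fintype.card ι ≤ |∑ j, (h (Y j ω) - ∫ ω', h (Y j ω') ∂P)|}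

theorem exists_rate_measureReal_deviationEvent_le {L s M : ℝ} (hL : 0 < L) (hs : 0 < s)
    (hM : 0 < M) : ∃ c > (0 : ℝ), ∀ {Ω : Type*} [MeasurableSpace Ω] {P : Measure Ω} {ι : Type*}
      [Fintype ι] {Y : ι → Ω → ℝ} {h : ℝ → ℝ} {ε : ℝ}, iIndepFun Y P →
      (∀ j, HasExpSqMomentLE (Y j) s M P) → LinearGrowthLipschitzWith L h → 0 < ε → ε ≤ 1 →
      P.real (deviationEvent P h Y ((M + 1) / s) (ε / 2))
        ≤ 3 * Real.exp (-(c * ε ^ 2 * Fintype.card ι)) := by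
  set K := 8 * (Real.exp (s + M) * M) / (s / (2 * L)) ^ 2
  set l := min (s / (2 * L) / 2) (1 / (2 * K))
  have hK : 0 < K := by positivity
  have : 0 < l := by positivity
  refine ⟨min (l / 8) 1, by positivity, fun {Ω} _ {P ι} _ {Y h ε} hindep hY hh hε hε' ↦ ?_⟩
  have := hindep.isProbabilityMeasure
  set c := min (l / 8) 1
  have hsq : P.real {ω | (M + 1) / s * Fintype.card ι ≤ ∑ j, Y j ω ^ 2}
      ≤ Real.exp (-(c * ε ^ 2 * Fintype.card ι)) := by
    refine (measureReal_sum_sq_ge_le_exp_of_hasExpSqMomentLE hindep hs hY).trans ?_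
    have : c * ε ^ 2 ≤ 1 :=
      mul_le_one₀ (min_le_right _ _) (sq_nonneg ε) (pow_le_one₀ hε.le hε')
    gcongr
    exact mul_le_of_le_one_left (Nat.cast_nonneg _) this
  have hdev : P.real {ω | ε / 2 * Fintype.card ι ≤ |∑ j, (h (Y j ω) - ∫ ω', h (Y j ω') ∂P)|}
      ≤ 2 * Real.exp (-(c * ε ^ 2 * Fintype.card ι)) := by
    refine (measureReal_abs_sum_ge_le_exp_of_hasSubexponentialMGF
      (hindep.comp (fun j x ↦ h x - ∫ ω', h (Y j ω') ∂P)
        fun j ↦ hh.continuous.measurable.sub_const _) hK (by positivity)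
      (fun j ↦ (hY j).hasSubexponentialMGF_comp hs hL hh) (half_pos hε) (by linarith)).trans ?_
    have hrate : c * ε ^ 2 ≤ l / 2 * (ε / 2) ^ 2 := by
      calc c * ε ^ 2 ≤ l / 8 * ε ^ 2 := by
            gcongr
            exact min_le_left _ _
        _ = l / 2 * (ε / 2) ^ 2 := by ring
    gcongr 2 * Real.exp (-(?_ * _))
  exact (measureReal_union_le _ _).trans (by linarith)

end ExpSqMoment

section Uniform

theorem one_add_two_div_pow_le_exp {r ε c m : ℝ} (hr : 0 < r) (hr' : r ≤ 1) (hε : 0 < ε)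
    (hε' : ε ≤ 1 / 2) (hc : 0 < c) {n : ℕ}
    (hm : (1 + Real.log (3 / r) / Real.log 2) / c * ε⁻¹ ^ 2 * Real.log (1 / ε) * n ≤ m) :
    (1 + 2 / (r * ε)) ^ n ≤ Real.exp (c * ε ^ 2 * m) := by
  have hlog2 : 0 < Real.log 2 := Real.log_pos one_lt_two
  have hlogr : 0 ≤ Real.log (3 / r) := Real.log_nonneg ((one_le_div hr).2 (by linarith))
  have hlogε : Real.log 2 ≤ Real.log (1 / ε) := by
    refine Real.log_le_log two_pos ?_
    rw [le_div_iff₀ hε]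
    linarith
  have hbase : 1 + 2 / (r * ε) ≤ 3 / r * (1 / ε) := by
    have : 1 ≤ 1 / (r * ε) := (one_le_div (by positivity)).2 (by nlinarith)
    calc 1 + 2 / (r * ε) ≤ 1 / (r * ε) + 2 / (r * ε) := by gcongr
      _ = 3 / r * (1 / ε) := by
        field_simp
        norm_num
  have hlog : Real.log (3 / r * (1 / ε))
      ≤ (1 + Real.log (3 / r) / Real.log 2) * Real.log (1 / ε) := by
    rw [Real.log_mul (by positivity) (by positivity), add_mul, one_mul, add_comm,
      div_mul_eq_mul_div]
    gcongr
    rw [le_div_iff₀ hlog2]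
    gcongr
  calc (1 + 2 / (r * ε)) ^ n ≤ (3 / r * (1 / ε)) ^ n := by gcongr
    _ = Real.exp (n * Real.log (3 / r * (1 / ε))) := by
      rw [Real.exp_nat_mul, Real.exp_log (by positivity)]
    _ ≤ Real.exp (c * ε ^ 2 * ((1 + Real.log (3 / r) / Real.log 2) / c * ε⁻¹ ^ 2
          * Real.log (1 / ε) * n)) := by
      refine Real.exp_le_exp.2 ((mul_le_mul_of_nonneg_left hlog n.cast_nonneg).trans_eq ?_)
      field_simp
    _ ≤ Real.exp (c * ε ^ 2 * m) := by gcongr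

theorem one_sub_le_measure_of_measureReal_compl_le {α : Type*} [MeasurableSpace α] {μ : Measure α}
    [IsProbabilityMeasure μ] {s : Set α} {r : ℝ} (h : μ.real sᶜ ≤ r) :
    ENNReal.ofReal (1 - r) ≤ μ s := by
  have huniv : (1 : ℝ) ≤ μ.real s + μ.real sᶜ := by
    rw [← probReal_univ (μ := μ), ← Set.union_compl_self s]
    exact measureReal_union_le _ _
  rw [← ofReal_measureReal (μ := μ) (s := s)]
  exact ENNReal.ofReal_le_ofReal (by linarith)

theorem exists_finset_isCover_sphere_card_le_exp {E : Type*} [NormedAddCommGroup E]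
    [NormedSpace ℝ E] [FiniteDimensional ℝ E] {r ε c m : ℝ} (hr : 0 < r) (hr' : r ≤ 1) (hε : 0 < ε)
    (hε' : ε ≤ 1 / 2) (hc : 0 < c) (hm : (1 + Real.log (3 / r) / Real.log 2) / c * ε⁻¹ ^ 2
      * Real.log (1 / ε) * Module.finrank ℝ E ≤ m) :
    ∃ N : Finset E, (N : Set E) ⊆ Metric.sphere 0 1 ∧
      Metric.IsCover (r * ε).toNNReal (Metric.sphere 0 1) (N : Set E) ∧
      N.card ≤ Real.exp (c * ε ^ 2 * m) := by
  have hδ : 0 < r * ε := by positivity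
  obtain ⟨N, hNsub, hNcover, hNcard⟩ := exists_finset_isCover_card_le (Real.toNNReal_pos.2 hδ)
    zero_le_one (Metric.sphere_subset_closedBall (x := (0 : E)))
  rw [Real.coe_toNNReal _ hδ.le, mul_one] at hNcard
  exact ⟨N, hNsub, hNcover, hNcard.trans (one_add_two_div_pow_le_exp hr hr' hε hε' hc hm)⟩

variable {Ω E : Type*} [MeasurableSpace Ω] {P : Measure Ω} [NormedAddCommGroup E]
  [InnerProductSpace ℝ E]

theorem exists_norm_eq_one_inner_eq_norm_mul {w : E} (hw : w ≠ 0) :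
    ∃ u : E, ‖u‖ = 1 ∧ ∀ x : E, ⟪x, w⟫ = ‖w‖ * ⟪x, u⟫ := by
  refine ⟨‖w‖⁻¹ • w, norm_smul_inv_norm (𝕜 := ℝ) hw, fun x ↦ ?_⟩
  rw [real_inner_smul_right, mul_inv_cancel_left₀ (norm_ne_zero_iff.2 hw)]

theorem memLp_inner_of_forall_norm_eq_one {X : Ω → E} {p : ENNReal}
    (hX : ∀ u, ‖u‖ = 1 → MemLp (fun ω ↦ ⟪X ω, u⟫) p P) (w : E) :
    MemLp (fun ω ↦ ⟪X ω, w⟫) p P := by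
  rcases eq_or_ne w 0 with rfl | hw
  · simp
  · obtain ⟨u, hu, hwu⟩ := exists_norm_eq_one_inner_eq_norm_mul hw
    simpa only [hwu] using (hX u hu).const_mul ‖w‖

theorem integral_inner_sq_le_of_forall_norm_eq_one {X : Ω → E} {S : ℝ}
    (hX : ∀ u, ‖u‖ = 1 → ∫ ω, ⟪X ω, u⟫ ^ 2 ∂P ≤ S) (w : E) :
    ∫ ω, ⟪X ω, w⟫ ^ 2 ∂P ≤ S * ‖w‖ ^ 2 := by
  rcases eq_or_ne w 0 with rfl | hw
  · simp
  · obtain ⟨u, hu, hwu⟩ := exists_norm_eq_one_inner_eq_norm_mul hw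
    simp only [hwu, mul_pow, integral_const_mul]
    rw [mul_comm]
    gcongr
    exact hX u hu

variable {ι : Type*} [Fintype ι] {X : ι → Ω → E}

theorem abs_sum_comp_inner_sub_integral_le_of_isCover [IsProbabilityMeasure P] {L : ℝ} {h : ℝ → ℝ}
    (hh : LinearGrowthLipschitzWith L h) (hX : ∀ j w, MemLp (fun ω ↦ ⟪X j ω, w⟫) 2 P) {T : ℝ}
    (hT : 0 ≤ T) (hXT : ∀ j w, ∫ ω, ⟪X j ω, w⟫ ^ 2 ∂P ≤ T * ‖w‖ ^ 2) {δ : ℝ≥0} (hδ : 0 < δ)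
    (hδ' : δ ≤ 1 / 2) {N : Set E} (hNsub : N ⊆ Metric.sphere 0 1)
    (hN : Metric.IsCover δ (Metric.sphere 0 1) N) {η : ℝ} {ω : Ω}
    (hω : ∀ v ∈ N, ω ∉ deviationEvent P h (fun j ω ↦ ⟪X j ω, v⟫) T η) {u : E} (hu : ‖u‖ = 1) :
    |∑ j, (h ⟪X j ω, u⟫ - ∫ ω', h ⟪X j ω', u⟫ ∂P)|
      ≤ (η + L * δ / 2 * (6 + 35 * T)) * Fintype.card ι := by
  simp only [deviationEvent, Set.mem_union, Set.mem_ofPred_eq, not_or, not_le] at hω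
  obtain ⟨v, hv, huv⟩ := exists_norm_sub_le_of_isCover_sphere hN hu
  have hv₁ : ‖v‖ = 1 := mem_sphere_zero_iff_norm.1 (hNsub hv)
  have hsq : ∀ w, ∑ j, ⟪X j ω, w⟫ ^ 2 ≤ 4 * (T * Fintype.card ι) * ‖w‖ ^ 2 :=
    sum_inner_sq_le_of_isCover_sphere hδ' hN (by positivity) fun v hv ↦ (hω v hv).1.le
  have hsample : |∑ j, h ⟪X j ω, u⟫ - ∑ j, h ⟪X j ω, v⟫|
      ≤ L * δ / 2 * (3 * Fintype.card ι + 7 * (4 * (T * Fintype.card ι))) :=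
    hh.abs_sum_comp_inner_sub_le hsq hδ hu hv₁ huv
  have hmean : |∑ j, (∫ ω', h ⟪X j ω', v⟫ ∂P - ∫ ω', h ⟪X j ω', u⟫ ∂P)|
      ≤ Fintype.card ι * (L * δ / 2 * (3 + 7 * T)) := by
    refine (Finset.abs_sum_le_sum_abs _ _).trans ?_
    rw [← nsmul_eq_mul, ← Finset.card_univ]
    refine Finset.sum_le_card_nsmul _ _ _ fun j _ ↦ ?_
    simpa using hh.abs_integral_comp_inner_sub_le (hX j) (hXT j) hδ hv₁ hu
      ((norm_sub_rev v u).trans_le huv)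
  have hdecomp : ∑ j, (h ⟪X j ω, u⟫ - ∫ ω', h ⟪X j ω', u⟫ ∂P)
      = (∑ j, h ⟪X j ω, u⟫ - ∑ j, h ⟪X j ω, v⟫)
        + ∑ j, (h ⟪X j ω, v⟫ - ∫ ω', h ⟪X j ω', v⟫ ∂P)
        + ∑ j, (∫ ω', h ⟪X j ω', v⟫ ∂P - ∫ ω', h ⟪X j ω', u⟫ ∂P) := by
    simp only [Finset.sum_sub_distrib]
    ring
  rw [hdecomp]
  refine (abs_add_three _ _ _).trans ?_
  linarith [(hω v hv).2]

theorem measureReal_compl_forall_abs_sum_comp_inner_sub_integral_le [IsProbabilityMeasure P]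
    {L : ℝ} {h : ℝ → ℝ} (hh : LinearGrowthLipschitzWith L h)
    (hX : ∀ j w, MemLp (fun ω ↦ ⟪X j ω, w⟫) 2 P) {T : ℝ} (hT : 0 ≤ T)
    (hXT : ∀ j w, ∫ ω, ⟪X j ω, w⟫ ^ 2 ∂P ≤ T * ‖w‖ ^ 2) {δ : ℝ≥0} (hδ : 0 < δ)
    (hδ' : δ ≤ 1 / 2) {N : Finset E} (hNsub : (N : Set E) ⊆ Metric.sphere 0 1)
    (hN : Metric.IsCover δ (Metric.sphere 0 1) (N : Set E)) {η ε p : ℝ}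
    (hε : η + L * δ / 2 * (6 + 35 * T) ≤ ε)
    (hp : ∀ v ∈ N, P.real (deviationEvent P h (fun j ω ↦ ⟪X j ω, v⟫) T η) ≤ p) :
    P.real {ω | ∀ u, ‖u‖ = 1 →
        |∑ j, (h ⟪X j ω, u⟫ - ∫ ω', h ⟪X j ω', u⟫ ∂P)| ≤ ε * Fintype.card ι}ᶜ
      ≤ N.card * p := by
  have hsub : {ω | ∀ u, ‖u‖ = 1 →
        |∑ j, (h ⟪X j ω, u⟫ - ∫ ω', h ⟪X j ω', u⟫ ∂P)| ≤ ε * Fintype.card ι}ᶜ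
      ⊆ ⋃ v ∈ N, deviationEvent P h (fun j ω ↦ ⟪X j ω, v⟫) T η := by
    refine Set.compl_subset_comm.1 fun ω hω u hu ↦ ?_
    simp only [Set.mem_compl_iff, Set.mem_iUnion, not_exists] at hω
    exact (abs_sum_comp_inner_sub_integral_le_of_isCover hh hX hT hXT hδ hδ' hNsub hN hω hu).trans
      (by gcongr)
  calc _ ≤ P.real (⋃ v ∈ N, deviationEvent P h (fun j ω ↦ ⟪X j ω, v⟫) T η) :=
        measureReal_mono hsub (measure_ne_top _ _)
    _ ≤ ∑ v ∈ N, P.real (deviationEvent P h (fun j ω ↦ ⟪X j ω, v⟫) T η) :=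
      measureReal_biUnion_finset_le _ _
    _ ≤ N.card • p := Finset.sum_le_card_nsmul _ _ _ hp
    _ = N.card * p := nsmul_eq_mul _ _

end Uniform

theorem exists_ofReal_one_sub_le_measure_abs_sum_comp_inner_sub_le {L s M : ℝ}
    (hL : 0 < L) (hs : 0 < s) (hM : 0 < M) :
    ∃ C > (0 : ℝ), ∃ c > (0 : ℝ), ∀ {Ω : Type*} [MeasurableSpace Ω] {P : Measure Ω}
      {E : Type*} [NormedAddCommGroup E] [InnerProductSpace ℝ E] [FiniteDimensional ℝ E]
      [MeasurableSpace E] [BorelSpace E] {ι : Type*} [Fintype ι] {X : ι → Ω → E} {h : ℝ → ℝ}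
      {ε : ℝ}, LinearGrowthLipschitzWith L h → iIndepFun X P →
      (∀ j u, ‖u‖ = 1 → HasExpSqMomentLE (fun ω ↦ ⟪X j ω, u⟫) s M P) → 0 < ε → ε ≤ 1 / 2 →
      C * ε⁻¹ ^ 2 * Real.log (1 / ε) * Module.finrank ℝ E ≤ Fintype.card ι →
      ENNReal.ofReal (1 - 3 * Real.exp (-(c * ε ^ 2 * Fintype.card ι)))
        ≤ P {ω | ∀ u, ‖u‖ = 1 →
          |∑ j, (h ⟪X j ω, u⟫ - ∫ ω', h ⟪X j ω', u⟫ ∂P)| ≤ ε * Fintype.card ι} := by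
  obtain ⟨c, hc, hrate⟩ := exists_rate_measureReal_deviationEvent_le hL hs hM
  set T := (M + 1) / s with hT
  have hT₀ : 0 < T := by positivity
  obtain ⟨r, hr₀, hr₁, hr⟩ : ∃ r : ℝ, 0 < r ∧ r ≤ 1 ∧ r * (L * (6 + 35 * T)) ≤ 1 :=
    ⟨(1 + L * (6 + 35 * T))⁻¹, by positivity,
      inv_le_one_of_one_le₀ (le_add_of_nonneg_right (by positivity)),
      (inv_mul_le_one₀ (by positivity)).2 (by linarith)⟩
  have hlogr : 0 ≤ Real.log (3 / r) := Real.log_nonneg ((one_le_div hr₀).2 (by linarith))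
  have : 0 < Real.log 2 := Real.log_pos one_lt_two
  refine ⟨(1 + Real.log (3 / r) / Real.log 2) / (c / 2), by positivity, c / 2, by positivity,
    fun {Ω _ P E} _ _ _ _ _ {ι} _ {X h ε} hh hindep hX hε hε' hcard ↦ ?_⟩
  have := hindep.isProbabilityMeasure
  obtain ⟨N, hNsub, hNcover, hNcard⟩ :=
    exists_finset_isCover_sphere_card_le_exp (E := E) hr₀ hr₁ hε hε' (half_pos hc) hcard
  have hmem (j w) : MemLp (fun ω ↦ ⟪X j ω, w⟫) 2 P :=
    memLp_inner_of_forall_norm_eq_one (fun u hu ↦ (hX j u hu).memLp_two hs) w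
  have hmoment (j w) : ∫ ω, ⟪X j ω, w⟫ ^ 2 ∂P ≤ T * ‖w‖ ^ 2 :=
    integral_inner_sq_le_of_forall_norm_eq_one (fun u hu ↦
      ((hX j u hu).integral_sq_le hs).trans (by rw [hT]; gcongr; linarith)) w
  have happrox : ε / 2 + L * (r * ε).toNNReal / 2 * (6 + 35 * T) ≤ ε := by
    rw [Real.coe_toNNReal _ (by positivity)]
    linarith [mul_le_mul_of_nonneg_right hr hε.le]
  have hδ : (r * ε).toNNReal ≤ 1 / 2 := by
    rw [Real.toNNReal_le_iff_le_coe]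
    push_cast
    nlinarith
  have hp : ∀ v ∈ N, P.real (deviationEvent P h (fun j ω ↦ ⟪X j ω, v⟫) T (ε / 2))
      ≤ 3 * Real.exp (-(c * ε ^ 2 * Fintype.card ι)) := fun v hv ↦
    hrate (hindep.comp (fun _ x ↦ ⟪x, v⟫) fun _ ↦ by fun_prop)
      (fun j ↦ hX j v (mem_sphere_zero_iff_norm.1 (hNsub hv))) hh hε (by linarith)
  refine one_sub_le_measure_of_measureReal_compl_le ?_
  calc _ ≤ N.card * (3 * Real.exp (-(c * ε ^ 2 * Fintype.card ι))) :=
        measureReal_compl_forall_abs_sum_comp_inner_sub_integral_le hh hmem hT₀.le hmoment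
          (Real.toNNReal_pos.2 (by positivity)) hδ hNsub hNcover happrox hp
    _ ≤ Real.exp (c / 2 * ε ^ 2 * Fintype.card ι)
        * (3 * Real.exp (-(c * ε ^ 2 * Fintype.card ι))) := by gcongr
    _ = 3 * Real.exp (-(c / 2 * ε ^ 2 * Fintype.card ι)) := by
      rw [mul_left_comm, ← Real.exp_add]
      ring_nf

theorem HasExpSqMomentLE.of_hasLaw {Ω : Type*} [MeasurableSpace Ω] {P : Measure Ω} {Y : Ω → ℝ}
    {μ : Measure ℝ} {s : ℝ} (hY : HasLaw Y μ P)
    (hint : Integrable (fun x ↦ Real.exp (s * x ^ 2)) μ) :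
    HasExpSqMomentLE Y s (∫ x, Real.exp (s * x ^ 2) ∂μ) P where
  aemeasurable := hY.aemeasurable
  integrable_exp_sq := by
    rw [← hY.map_eq] at hint
    exact hint.comp_aemeasurable hY.aemeasurable
  integral_exp_sq_le := (hY.integral_comp hint.aestronglyMeasurable).le

theorem abs_average_sub_le_iff {ι : Type*} [Fintype ι] [Nonempty ι] (f : ι → ℝ) (e ε : ℝ) :
    |1 / (Fintype.card ι : ℝ) * ∑ j, f j - e| ≤ ε ↔ |∑ j, (f j - e)| ≤ ε * Fintype.card ι := by
  have hcard : (0 : ℝ) < Fintype.card ι := by exact_mod_cast Fintype.card_pos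
  have h : ∑ j, (f j - e) = (1 / (Fintype.card ι : ℝ) * ∑ j, f j - e) * Fintype.card ι := by
    rw [Finset.sum_sub_distrib, Finset.sum_const, Finset.card_univ, nsmul_eq_mul]
    field_simp
  rw [h, abs_mul, abs_of_pos hcard, mul_le_mul_iff_left₀ hcard]

theorem uniform_concentration_lipschitz_general {L s : ℝ} (hL : 0 < L) (hs : 0 < s)
    {ν : Measure ℝ} [IsProbabilityMeasure ν] (hν : Integrable (fun z ↦ Real.exp (s * z ^ 2)) ν) :
    ∃ C > (0 : ℝ), ∃ c > (0 : ℝ), ∀ {Ω : Type*} [MeasurableSpace Ω] {P : Measure Ω} {E : Type*}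
      [NormedAddCommGroup E] [InnerProductSpace ℝ E] [FiniteDimensional ℝ E] [MeasurableSpace E]
      [BorelSpace E] {ι : Type*} [Fintype ι] {X : ι → Ω → E} {h : ℝ → ℝ} {ε : ℝ},
      LinearGrowthLipschitzWith L h → iIndepFun X P →
      (∀ j u, ‖u‖ = 1 → HasLaw (fun ω ↦ ⟪X j ω, u⟫) ν P) → 0 < ε → ε ≤ 1 / 2 →
      C * ε⁻¹ ^ 2 * Real.log (1 / ε) * Module.finrank ℝ E ≤ Fintype.card ι →
      ENNReal.ofReal (1 - 3 * Real.exp (-(c * ε ^ 2 * Fintype.card ι)))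
        ≤ P {ω | ∀ u, ‖u‖ = 1 →
          |1 / (Fintype.card ι : ℝ) * ∑ j, h ⟪X j ω, u⟫ - ∫ z, h z ∂ν| ≤ ε} := by
  obtain ⟨C, hC, c, hc, hconc⟩ :=
    exists_ofReal_one_sub_le_measure_abs_sum_comp_inner_sub_le hL hs (integral_exp_pos hν)
  refine ⟨C, hC, c, hc, fun {Ω _ P E} _ _ _ _ _ {ι} _ {X h ε} hh hindep hX hε hε' hcard ↦ ?_⟩
  rcases isEmpty_or_nonempty ι with hι | hι
  · norm_num [ENNReal.ofReal_of_nonpos]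
  refine (hconc hh hindep (fun j u hu ↦ .of_hasLaw (hX j u hu) hν) hε hε' hcard).trans
    (measure_mono fun ω hω u hu ↦ (abs_average_sub_le_iff _ _ ε).2 ?_)
  have hmean (j : ι) : ∫ ω', h ⟪X j ω', u⟫ ∂P = ∫ z, h z ∂ν :=
    (hX j u hu).integral_comp hh.continuous.aestronglyMeasurable
  simpa only [hmean] using hω u hu

theorem hasLaw_inner_stdGaussian {E : Type*} [NormedAddCommGroup E] [InnerProductSpace ℝ E]
    [FiniteDimensional ℝ E] [MeasurableSpace E] [BorelSpace E] {u : E} (hu : ‖u‖ = 1) :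
    HasLaw (fun x ↦ ⟪x, u⟫) (gaussianReal 0 1) (stdGaussian E) where
  aemeasurable := by fun_prop
  map_eq := by
    have h := IsGaussian.map_eq_gaussianReal (μ := stdGaussian E) (innerSL ℝ u)
    rw [integral_strongDual_stdGaussian, variance_dual_stdGaussian, innerSL_apply_norm, hu] at h
    simpa [real_inner_comm] using h

theorem hasLaw_toLp_row_stdGaussianMat {m n : ℕ} (j : Fin m) :
    HasLaw (fun a ↦ WithLp.toLp 2 (a j)) (stdGaussian (EuclideanSpace ℝ (Fin n)))
      (stdGaussianMat m n) := by
  have h : HasLaw (WithLp.toLp 2) (stdGaussian (EuclideanSpace ℝ (Fin n)))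
      (Measure.pi fun _ : Fin n ↦ gaussianReal 0 1) := ⟨by fun_prop, map_pi_eq_stdGaussian⟩
  exact h.comp (measurePreserving_eval (fun _ : Fin m ↦ Measure.pi fun _ : Fin n ↦ gaussianReal 0 1)
    j).hasLaw

theorem hasLaw_inner_row_stdGaussianMat {m n : ℕ} (j : Fin m) {u : EuclideanSpace ℝ (Fin n)}
    (hu : ‖u‖ = 1) :
    HasLaw (fun a ↦ ⟪WithLp.toLp 2 (a j), u⟫) (gaussianReal 0 1) (stdGaussianMat m n) :=
  (hasLaw_inner_stdGaussian hu).comp (hasLaw_toLp_row_stdGaussianMat j)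

theorem iIndepFun_toLp_row_stdGaussianMat (m n : ℕ) :
    iIndepFun (fun (j : Fin m) (a : Fin m → Fin n → ℝ) ↦ WithLp.toLp 2 (a j))
      (stdGaussianMat m n) :=
  iIndepFun_pi fun _ ↦ by fun_prop

theorem inner_toLp_toLp_eq_sum {ι : Type*} [Fintype ι] (x y : ι → ℝ) :
    ⟪WithLp.toLp 2 x, WithLp.toLp 2 y⟫ = ∑ i, x i * y i := by
  simp [PiLp.inner_apply, mul_comm]

theorem norm_toLp_eq_one_iff {ι : Type*} [Fintype ι] {u : ι → ℝ} :
    ‖WithLp.toLp 2 u‖ = 1 ↔ ∑ i, u i ^ 2 = 1 := by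
  simp [EuclideanSpace.norm_eq]

/-- Uniform concentration for Lipschitz sub-exponential functions of Gaussian
projections: if `h` is locally Lipschitz with `|h(z) − h(z̃)| ≤ L(1+|z|+|z̃|)|z−z̃|`
and `‖h(Z)‖_{ψ₁} ≤ L`, then for `0 < ε ≤ 1/2` and `m ≥ C ε⁻² log(1/ε) n`, with
probability at least `1 − 3exp(−c ε² m)`, `|(1/m)∑ⱼ h(aⱼᵀu) − E h(Z)| ≤ ε` for all
unit `u`. -/
theorem uniform_concentration_lipschitz :
    ∀ L : ℝ, 0 < L → ∃ C > (0 : ℝ), ∃ c > (0 : ℝ), ∀ h : ℝ → ℝ,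
      (∀ z z' : ℝ, |h z - h z'| ≤ L * (1 + |z| + |z'|) * |z - z'|) →
      (∫ z, Real.exp (|h z| / L) ∂(gaussianReal 0 1) ≤ 2) →
      ∀ ε : ℝ, 0 < ε → ε ≤ 1 / 2 → ∀ n m : ℕ,
      (m : ℝ) ≥ C * ε⁻¹ ^ 2 * Real.log (1 / ε) * n →
      stdGaussianMat m n {a | ∀ u : Fin n → ℝ, ∑ i, (u i) ^ 2 = 1 →
          |(1 / (m : ℝ)) * ∑ j, h (∑ i, a j i * u i)
            - ∫ z, h z ∂(gaussianReal 0 1)| ≤ ε}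
        ≥ ENNReal.ofReal (1 - 3 * Real.exp (-(c * ε ^ 2 * m))) := by
  intro L hL
  obtain ⟨s, hs, hint⟩ := IsGaussian.exists_integrable_exp_sq (gaussianReal 0 1)
  simp only [Real.norm_eq_abs, sq_abs] at hint
  obtain ⟨C, hC, c, hc, hconc⟩ := uniform_concentration_lipschitz_general hL hs hint
  refine ⟨C, hC, c, hc, fun h hh _ ε hε hε' n m hm ↦ ?_⟩
  have hrow := hconc hh (iIndepFun_toLp_row_stdGaussianMat m n)
    (fun j _ ↦ hasLaw_inner_row_stdGaussianMat j) hε hε' (by simpa using hm)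
  rw [Fintype.card_fin] at hrow
  refine hrow.trans (measure_mono fun a ha u hu ↦ ?_)
  simpa only [inner_toLp_toLp_eq_sum] using ha (WithLp.toLp 2 u) (norm_toLp_eq_one_iff.2 hu)
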